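/- arXiv:math/9804007 — 2 statements merged into one kernel-verified Lean document; each statement's English description precedes it below -/
import Mathlib

section
/- Let U ⊆ ℂ² be an open neighbourhood of the closed unit bidisc P̄ = {(z₁,z₂) ∈ ℂ² : |z₁| ≤ 1 and |z₂| ≤ 1}, and let t₁₁, t₂₂ : U → ℝ and t₁₂ : U → ℂ be C¹ functions such that pointwise on U one has t₁₁ ≥ 0, t₂₂ ≥ 0 and t₁₁·t₂₂ ≥ |t₁₂|² (positivity of the (1,1)-form with coefficient matrix ((t₁₁, t₁₂),(conj t₁₂, t₂₂))), and such that the closedness identities ∂t₂₂/∂z₁ = ∂t₁₂/∂z₂ and ∂t₁₁/∂z₂ = ∂(conj t₁₂)/∂z₁ hold on U (Wirtinger derivatives). Let M ≥ 0 be such that t₁₁(z) ≤ M, t₂₂(z) ≤ M and |t₁₂(z)| ≤ M for every z in the closed Hartogs annulus Ā = {(z₁,z₂) ∈ P̄ : max(|z₁|, |z₂|) ≥ 1/2}. Then there is an absolute constant C, independent of t₁₁, t₁₂, t₂₂ and of M, such that ∫_P (t₁₁ + t₂₂ + 2·|t₁₂|) dλ ≤ C·M, where P is the open unit bidisc. (This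 uniform mass estimate for smooth closed positive (1,1)-forms on the bidisc from bounds on the Hartogs annulus is the analytic core of the paper's Theorem 2, the a priori estimate of the volume of graphs, formulas (2.4.1)–(2.4.3).) -/
open Metric MeasureTheory Complex

/-- The Wirtinger derivative `∂u/∂z₁ = ½(∂u/∂x₁ − i·∂u/∂y₁)` of a function
`u : ℂ × ℂ → ℂ`, computed from the real Fréchet derivative. -/
noncomputable def wirtingerFst (u : ℂ × ℂ → ℂ) (p : ℂ × ℂ) : ℂ :=
  (1 / 2 : ℂ) * (fderiv ℝ u p (1, 0) - Complex.I * fderiv ℝ u p (Complex.I, 0))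

/-- The Wirtinger derivative `∂u/∂z₂ = ½(∂u/∂x₂ − i·∂u/∂y₂)` of a function
`u : ℂ × ℂ → ℂ`, computed from the real Fréchet derivative. -/
noncomputable def wirtingerSnd (u : ℂ × ℂ → ℂ) (p : ℂ × ℂ) : ℂ :=
  (1 / 2 : ℂ) * (fderiv ℝ u p (0, 1) - Complex.I * fderiv ℝ u p (0, Complex.I))

lemma ibp_aux {U : Set (ℂ × ℂ)} (hU : IsOpen U) {f G : ℂ × ℂ → ℂ}
    (hf : ContDiffOn ℝ 1 f U) (hG : ContDiff ℝ 1 G) (hc : HasCompactSupport G)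
    (hs : tsupport G ⊆ U) (v : ℂ × ℂ) :
    Integrable (fun p => fderiv ℝ f p v * G p) ∧ Integrable (fun p => f p * fderiv ℝ G p v) ∧
    ∫ p, fderiv ℝ f p v * G p = - ∫ p, f p * fderiv ℝ G p v := by
  have hGd : Continuous (fun p => fderiv ℝ G p v) :=
    (hG.continuous_fderiv one_ne_zero).clm_apply continuous_const
  have hfd : ContinuousOn (fun p => fderiv ℝ f p v) U :=
    (hf.continuousOn_fderiv_of_isOpen hU le_rfl).clm_apply continuousOn_const
  have hdz : ∀ p, p ∉ tsupport G → fderiv ℝ G p v = 0 := fun p hp => by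
    have : fderiv ℝ G p = 0 := by
      by_contra h
      exact hp (support_fderiv_subset ℝ (f := G) h)
    simp [this]
  have hz : ∀ p, p ∉ tsupport G → G p = 0 := fun p hp => image_eq_zero_of_notMem_tsupport hp
  -- continuity of products
  have key : ∀ (a b : ℂ × ℂ → ℂ), ContinuousOn a U → Continuous b →
      (∀ p, p ∉ tsupport G → b p = 0) → Integrable (fun p => a p * b p) := by
    intro a b ha hb hb0
    have hcont : Continuous (fun p => a p * b p) := by
      rw [continuous_iff_continuousAt]
      intro p
      by_cases hp : p ∈ U
      · exact (ha.continuousAt (hU.mem_nhds hp)).mul hb.continuousAt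
      · have hp' : p ∉ tsupport G := fun h => hp (hs h)
        have : (fun p => a p * b p) =ᶠ[nhds p] fun _ => 0 := by
          filter_upwards [(isClosed_tsupport G).isOpen_compl.mem_nhds hp'] with q hq
          rw [hb0 q hq, mul_zero]
        exact continuousAt_const.congr this.symm
    apply hcont.integrable_of_hasCompactSupport
    apply HasCompactSupport.intro hc
    intro p hp
    rw [hb0 p hp, mul_zero]
  have i1 := key _ _ hfd hG.continuous hz
  have i2 := key _ _ hf.continuousOn hGd hdz
  have i3 := key _ _ hf.continuousOn hG.continuous hz
  refine ⟨i1, i2, ?_⟩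
  have hder : ∀ p, HasLineDerivAt ℝ (fun p => f p * G p)
      (fderiv ℝ f p v * G p + f p * fderiv ℝ G p v) p v := by
    intro p
    by_cases hp : p ∈ U
    · have h1 : HasFDerivAt f (fderiv ℝ f p) p :=
        ((hf.contDiffAt (hU.mem_nhds hp)).differentiableAt one_ne_zero).hasFDerivAt
      have h2 : HasFDerivAt G (fderiv ℝ G p) p :=
        (hG.contDiffAt.differentiableAt one_ne_zero).hasFDerivAt
      have := (h1.mul h2).hasLineDerivAt v
      have h3 : fderiv ℝ f p v * G p + f p * fderiv ℝ G p v =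
          (f p • fderiv ℝ G p + G p • fderiv ℝ f p) v := by
        rw [add_comm]
        simp [mul_comm]
      rw [h3]
      exact this
    · have hp' : p ∉ tsupport G := fun h => hp (hs h)
      have : (fun p => f p * G p) =ᶠ[nhds p] fun _ => 0 := by
        filter_upwards [(isClosed_tsupport G).isOpen_compl.mem_nhds hp'] with q hq
        rw [hz q hq, mul_zero]
      rw [hz p hp', hdz p hp']
      have h0 := ((hasFDerivAt_const (𝕜 := ℝ) (0 : ℂ) p).congr_of_eventuallyEq this).hasLineDerivAt v
      simpa using h0
  have h1 : ∀ p, HasLineDerivAt ℝ (fun _ : ℂ × ℂ => (1 : ℂ)) 0 p v := by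
    intro p
    simpa using (hasFDerivAt_const (𝕜 := ℝ) (1 : ℂ) p).hasLineDerivAt v
  have : (volume : Measure (ℂ × ℂ)).IsAddHaarMeasure :=
    inferInstanceAs ((volume : Measure ℂ).prod (volume : Measure ℂ)).IsAddHaarMeasure
  have i12 : Integrable (fun p => fderiv ℝ f p v * G p + f p * fderiv ℝ G p v) := i1.add i2
  have := integral_bilinear_hasLineDerivAt_right_eq_neg_left_of_integrable
    (μ := (volume : Measure (ℂ × ℂ))) (B := ContinuousLinearMap.mul ℝ ℂ)
    (f := fun p => f p * G p) (g := fun _ => (1:ℂ)) (g' := fun _ => 0) (v := v)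
    (f' := fun p => fderiv ℝ f p v * G p + f p * fderiv ℝ G p v)
    (by simpa using i12) (by simp) (by simpa using i3) (fun p _ => hder p) (fun p _ => h1 p)
  simp only [ContinuousLinearMap.mul_apply', mul_zero, mul_one, integral_zero] at this
  rw [integral_add i1 i2] at this
  linear_combination this

/-- one variable first order operator -/
noncomputable def dOp (c : ℂ) (f : ℂ → ℂ) (z : ℂ) : ℂ :=
  (1 / 2 : ℂ) * (fderiv ℝ f z 1 + c * fderiv ℝ f z Complex.I)

lemma ibpW {U : Set (ℂ × ℂ)} (hU : IsOpen U) {f G : ℂ × ℂ → ℂ}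
    (hf : ContDiffOn ℝ 1 f U) (hG : ContDiff ℝ 1 G) (hc : HasCompactSupport G)
    (hs : tsupport G ⊆ U) (v w : ℂ × ℂ) (c : ℂ) :
    ∫ p, ((1 / 2 : ℂ) * (fderiv ℝ f p v + c * fderiv ℝ f p w)) * G p =
    - ∫ p, f p * ((1 / 2 : ℂ) * (fderiv ℝ G p v + c * fderiv ℝ G p w)) := by
  obtain ⟨a1, a2, a3⟩ := ibp_aux hU hf hG hc hs v
  obtain ⟨b1, b2, b3⟩ := ibp_aux hU hf hG hc hs w
  have e1 : ∀ p, ((1 / 2 : ℂ) * (fderiv ℝ f p v + c * fderiv ℝ f p w)) * G p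
    = (1/2) * (fderiv ℝ f p v * G p) + (c/2) * (fderiv ℝ f p w * G p) := fun p => by ring
  have e2 : ∀ p, f p * ((1 / 2 : ℂ) * (fderiv ℝ G p v + c * fderiv ℝ G p w))
    = (1/2) * (f p * fderiv ℝ G p v) + (c/2) * (f p * fderiv ℝ G p w) := fun p => by ring
  simp_rw [e1, e2]
  rw [integral_add (a1.const_mul _) (b1.const_mul _), integral_add (a2.const_mul _) (b2.const_mul _)]
  simp only [integral_const_mul]
  rw [a3, b3]; ring

/-- test function with support in the closed unit disc -/
def IsTest (X : ℂ → ℂ) : Prop := ContDiff ℝ ((⊤ : ℕ∞) : WithTop ℕ∞) (X) ∧ ∀ z, z ∉ closedBall (0:ℂ) (3/4) → X z = 0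

lemma IsTest.tsupp {X : ℂ → ℂ} (h : IsTest X) : tsupport X ⊆ closedBall (0:ℂ) (3/4) :=
  closure_minimal (fun z hz => by by_contra h'; exact hz (h.2 z h')) isClosed_closedBall

lemma IsTest.dOp {X : ℂ → ℂ} (h : IsTest X) (c : ℂ) : IsTest (dOp c X) := by
  constructor
  · have h1 : ContDiff ℝ ((⊤ : ℕ∞) : WithTop ℕ∞) (fderiv ℝ X) := h.1.fderiv_right (m := ((⊤ : ℕ∞) : WithTop ℕ∞)) (by simp)
    exact contDiff_const.mul ((h1.clm_apply contDiff_const).add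
      (contDiff_const.mul (h1.clm_apply contDiff_const)))
  · intro z hz
    have : fderiv ℝ X z = 0 := by
      by_contra h'
      exact hz (h.tsupp (support_fderiv_subset ℝ (f := X) h'))
    simp [_root_.dOp, this]

lemma prod_test {X Y : ℂ → ℂ} (hX : IsTest X) (hY : IsTest Y) :
    ContDiff ℝ 1 (fun p : ℂ × ℂ => X p.1 * Y p.2) ∧
    HasCompactSupport (fun p : ℂ × ℂ => X p.1 * Y p.2) ∧
    tsupport (fun p : ℂ × ℂ => X p.1 * Y p.2) ⊆ closedBall (0:ℂ) (3/4) ×ˢ closedBall (0:ℂ) (3/4) := by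
  have hz : ∀ p : ℂ × ℂ, p ∉ closedBall (0:ℂ) (3/4) ×ˢ closedBall (0:ℂ) (3/4) →
      X p.1 * Y p.2 = 0 := by
    intro p hp
    rw [Set.mem_prod, not_and_or] at hp
    rcases hp with hp | hp
    · rw [hX.2 _ hp, zero_mul]
    · rw [hY.2 _ hp, mul_zero]
  refine ⟨?_, ?_, ?_⟩
  · exact ((hX.1.of_le (by exact_mod_cast le_top)).comp contDiff_fst).mul ((hY.1.of_le (by exact_mod_cast le_top)).comp contDiff_snd)
  · exact HasCompactSupport.intro ((isCompact_closedBall _ _).prod (isCompact_closedBall _ _)) hz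
  · exact closure_minimal (fun z h => by by_contra h'; exact h (hz z h'))
      (isClosed_closedBall.prod isClosed_closedBall)

lemma fderiv_prod_test {X Y : ℂ → ℂ} (hX : IsTest X) (hY : IsTest Y) (p v : ℂ × ℂ) :
    fderiv ℝ (fun p : ℂ × ℂ => X p.1 * Y p.2) p v =
      fderiv ℝ X p.1 v.1 * Y p.2 + X p.1 * fderiv ℝ Y p.2 v.2 := by
  have h1 : HasFDerivAt X (fderiv ℝ X p.1) p.1 :=
    (hX.1.contDiffAt.differentiableAt (by simp)).hasFDerivAt
  have h2 : HasFDerivAt Y (fderiv ℝ Y p.2) p.2 :=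
    (hY.1.contDiffAt.differentiableAt (by simp)).hasFDerivAt
  have h1' : HasFDerivAt (fun q : ℂ × ℂ => X q.1) _ p := h1.comp p hasFDerivAt_fst
  have h2' : HasFDerivAt (fun q : ℂ × ℂ => Y q.2) _ p := h2.comp p hasFDerivAt_snd
  have h3 : HasFDerivAt (fun p : ℂ × ℂ => X p.1 * Y p.2) _ p := h1'.mul h2'
  rw [h3.fderiv]
  simp
  ring

lemma ibp1 {U : Set (ℂ × ℂ)} (hU : IsOpen U)
    (hK : (closedBall (0 : ℂ) 1 ×ˢ closedBall (0 : ℂ) 1) ⊆ U) {f : ℂ × ℂ → ℂ}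
    (hf : ContDiffOn ℝ 1 f U) {X Y : ℂ → ℂ} (hX : IsTest X) (hY : IsTest Y) (c : ℂ) :
    ∫ p, ((1 / 2 : ℂ) * (fderiv ℝ f p (1, 0) + c * fderiv ℝ f p (I, 0))) * (X p.1 * Y p.2) =
    - ∫ p, f p * (dOp c X p.1 * Y p.2) := by
  obtain ⟨h1, h2, h3⟩ := prod_test hX hY
  rw [ibpW hU hf h1 h2 (h3.trans ((Set.prod_mono (closedBall_subset_closedBall (by norm_num))
    (closedBall_subset_closedBall (by norm_num))).trans hK))]
  congr 2
  ext p
  simp only [fderiv_prod_test hX hY, dOp, map_zero]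
  ring

lemma ibp2 {U : Set (ℂ × ℂ)} (hU : IsOpen U)
    (hK : (closedBall (0 : ℂ) 1 ×ˢ closedBall (0 : ℂ) 1) ⊆ U) {f : ℂ × ℂ → ℂ}
    (hf : ContDiffOn ℝ 1 f U) {X Y : ℂ → ℂ} (hX : IsTest X) (hY : IsTest Y) (c : ℂ) :
    ∫ p, ((1 / 2 : ℂ) * (fderiv ℝ f p (0, 1) + c * fderiv ℝ f p (0, I))) * (X p.1 * Y p.2) =
    - ∫ p, f p * (X p.1 * dOp c Y p.2) := by
  obtain ⟨h1, h2, h3⟩ := prod_test hX hY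
  rw [ibpW hU hf h1 h2 (h3.trans ((Set.prod_mono (closedBall_subset_closedBall (by norm_num))
    (closedBall_subset_closedBall (by norm_num))).trans hK))]
  congr 2
  ext p
  simp only [fderiv_prod_test hX hY, dOp, map_zero]
  ring

/-- If the coefficients agree on `U`, the integrals against a test product agree. -/
lemma integral_test_congr {U : Set (ℂ × ℂ)}
    (hK : (closedBall (0 : ℂ) 1 ×ˢ closedBall (0 : ℂ) 1) ⊆ U) {a b : ℂ × ℂ → ℂ}
    (hab : ∀ p ∈ U, a p = b p) {X Y : ℂ → ℂ} (hX : IsTest X) (hY : IsTest Y) :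
    ∫ p, a p * (X p.1 * Y p.2) = ∫ p, b p * (X p.1 * Y p.2) := by
  congr 1
  ext p
  by_cases hp : p ∈ U
  · rw [hab p hp]
  · have : X p.1 * Y p.2 = 0 := by
      by_contra h
      have h3 := (prod_test hX hY).2.2 (subset_tsupport _ h)
      exact hp (hK (Set.prod_mono (closedBall_subset_closedBall (by norm_num))
        (closedBall_subset_closedBall (by norm_num)) h3))
    rw [this, mul_zero, mul_zero]

lemma isTest_bump : ∃ R G : ℂ → ℂ, IsTest R ∧ IsTest G ∧
    (∀ z ∈ ball (0:ℂ) (1/2), R z = 1) ∧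
    (∀ c, ∀ z ∈ ball (0:ℂ) (1/2), dOp (-c) (dOp c R) z = 0) ∧
    (∀ c, c * c = -1 → ∀ z ∈ ball (0:ℂ) (1/2), dOp (-c) (dOp c G) z = 1) := by
  let ρ : ContDiffBump (0:ℂ) := ⟨1/2, 3/4, by norm_num, by norm_num⟩
  have hρ : IsTest (fun z => ((ρ z : ℝ) : ℂ)) := by
    constructor
    · have := ρ.contDiff (n := ⊤)
      exact ofRealCLM.contDiff.comp this
    · intro z hz
      have : ρ z = 0 := ρ.zero_of_le_dist (by simp at hz ⊢; exact hz.le)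
      simp [this]
  have h1 : ∀ z ∈ ball (0:ℂ) (1/2), ((ρ z : ℝ) : ℂ) = 1 := by
    intro z hz
    rw [ρ.one_of_mem_closedBall (ball_subset_closedBall hz)]; simp
  have hloc : ∀ c (f g : ℂ → ℂ), (∀ z ∈ ball (0:ℂ) (1/2), f z = g z) →
      ∀ z ∈ ball (0:ℂ) (1/2), dOp c f z = dOp c g z := by
    intro c f g h z hz
    have : f =ᶠ[nhds z] g := by
      filter_upwards [isOpen_ball.mem_nhds hz] with w hw using h w hw
    simp only [dOp, this.fderiv_eq]
  refine ⟨fun z => ((ρ z : ℝ) : ℂ), fun z => ((z.re : ℂ) ^ 2 + (z.im : ℂ) ^ 2) * ((ρ z : ℝ) : ℂ),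
    hρ, ⟨?_, ?_⟩, h1, ?_, ?_⟩
  · refine ContDiff.mul ?_ hρ.1
    exact ((ofRealCLM.contDiff.comp reCLM.contDiff).pow 2).add
      ((ofRealCLM.contDiff.comp imCLM.contDiff).pow 2)
  · intro z hz
    simp only [hρ.2 z hz, mul_zero]
  · intro c z hz
    rw [hloc (-c) _ (fun _ => 0) ?_ z hz]
    · simp [dOp]
    · intro w hw
      rw [hloc c _ (fun _ => 1) h1 w hw]
      simp [dOp]
  · intro c hc z hz
    have hre : ∀ w : ℂ, HasFDerivAt (fun z : ℂ => (z.re : ℂ)) (ofRealCLM.comp reCLM) w :=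
      fun w => (ofRealCLM.comp reCLM).hasFDerivAt
    have him : ∀ w : ℂ, HasFDerivAt (fun z : ℂ => (z.im : ℂ)) (ofRealCLM.comp imCLM) w :=
      fun w => (ofRealCLM.comp imCLM).hasFDerivAt
    rw [hloc (-c) _ (fun z => (z.re : ℂ) + c * (z.im : ℂ)) ?_ z hz]
    · simp only [dOp]
      have h3 : HasFDerivAt (fun z : ℂ => (z.re : ℂ) + c * (z.im : ℂ)) _ z :=
        (hre z).add ((him z).const_mul c)
      rw [h3.fderiv]
      simp
      linear_combination (-1/2) * hc
    · intro w hw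
      rw [hloc c _ (fun z => (z.re : ℂ) * (z.re : ℂ) + (z.im : ℂ) * (z.im : ℂ)) ?_ w hw]
      · simp only [dOp]
        have h3 : HasFDerivAt (fun z : ℂ => (z.re : ℂ) * (z.re : ℂ) + (z.im : ℂ) * (z.im : ℂ)) _ w :=
          ((hre w).mul (hre w)).add ((him w).mul (him w))
        rw [h3.fderiv]
        simp
        ring
      · intro y hy
        rw [h1 y hy]; ring

lemma est {s t : ℂ × ℂ → ℝ} {A E : ℂ × ℂ → ℂ} {M B : ℝ}
    (hs : ContinuousOn s (closedBall (0 : ℂ) 1 ×ˢ closedBall (0 : ℂ) 1))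
    (hA : Continuous A)
    (hs0 : ∀ p ∈ closedBall (0 : ℂ) 1 ×ˢ closedBall (0 : ℂ) 1, 0 ≤ s p)
    (ht0 : ∀ p ∈ closedBall (0 : ℂ) 1 ×ˢ closedBall (0 : ℂ) 1, 0 ≤ t p)
    (hsM : ∀ p ∈ (closedBall (0 : ℂ) 1 ×ˢ closedBall (0 : ℂ) 1),
        (1 / 2 : ℝ) ≤ max ‖p.1‖ ‖p.2‖ → s p ≤ M)
    (htM : ∀ p ∈ (closedBall (0 : ℂ) 1 ×ˢ closedBall (0 : ℂ) 1),
        (1 / 2 : ℝ) ≤ max ‖p.1‖ ‖p.2‖ → t p ≤ M)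
    (hM : 0 ≤ M)
    (hAB : ∀ p, ‖A p‖ ≤ B) (hEB : ∀ p, ‖E p‖ ≤ B)
    (hA1 : ∀ p ∈ ball (0 : ℂ) (1/2) ×ˢ ball (0 : ℂ) (1/2), A p = 1)
    (hE0 : ∀ p ∈ ball (0 : ℂ) (1/2) ×ˢ ball (0 : ℂ) (1/2), E p = 0)
    (hAs : ∀ p, p ∉ closedBall (0 : ℂ) 1 ×ˢ closedBall (0 : ℂ) 1 → A p = 0)
    (hEs : ∀ p, p ∉ closedBall (0 : ℂ) 1 ×ˢ closedBall (0 : ℂ) 1 → E p = 0)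
    (heq : ∫ p, (s p : ℂ) * A p = ∫ p, (t p : ℂ) * E p) :
    ∫ p in closedBall (0 : ℂ) 1 ×ˢ closedBall (0 : ℂ) 1, s p ≤
      (2 * B + 1) * (volume (closedBall (0 : ℂ) 1 ×ˢ closedBall (0 : ℂ) 1)).toReal * M := by
  set K := closedBall (0 : ℂ) 1 ×ˢ closedBall (0 : ℂ) 1 with hKdef
  set Q := ball (0 : ℂ) (1/2) ×ˢ ball (0 : ℂ) (1/2) with hQdef
  have hKc : IsCompact K := (isCompact_closedBall _ _).prod (isCompact_closedBall _ _)
  have hQm : MeasurableSet Q := (isOpen_ball.prod isOpen_ball).measurableSet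
  have hKm : MeasurableSet K := hKc.isClosed.measurableSet
  have hQK : Q ⊆ K := Set.prod_mono
    (ball_subset_closedBall.trans (closedBall_subset_closedBall (by norm_num)))
    (ball_subset_closedBall.trans (closedBall_subset_closedBall (by norm_num)))
  have hB : 0 ≤ B := (norm_nonneg _).trans (hAB 0)
  have hfin : volume K < ⊤ := hKc.measure_lt_top
  have hfin' : volume (K \ Q) < ⊤ := (measure_mono Set.sdiff_subset).trans_lt hfin
  have hvol : volume.real (K \ Q) ≤ (volume K).toReal :=
    ENNReal.toReal_mono hfin.ne (measure_mono Set.sdiff_subset)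
  have hann : ∀ p ∈ K \ Q, (1 / 2 : ℝ) ≤ max ‖p.1‖ ‖p.2‖ := by
    rintro p ⟨-, hp⟩
    by_contra h
    push Not at h
    exact hp (by simpa [hQdef, Set.mem_prod] using h)
  have bound : ∀ (u : ℂ × ℂ → ℝ) (F : ℂ × ℂ → ℂ), (∀ p ∈ K, 0 ≤ u p) →
      (∀ p ∈ K, (1 / 2 : ℝ) ≤ max ‖p.1‖ ‖p.2‖ → u p ≤ M) → (∀ p, ‖F p‖ ≤ B) →
      ‖∫ p in K \ Q, (u p : ℂ) * F p‖ ≤ M * B * (volume K).toReal := by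
    intro u F h0 h1 h2
    refine (norm_setIntegral_le_of_norm_le_const hfin' (C := M * B) ?_).trans
      (mul_le_mul_of_nonneg_left hvol (by positivity))
    intro p hp
    rw [norm_mul]
    refine mul_le_mul ?_ (h2 p) (norm_nonneg _) hM
    rw [Complex.norm_real, Real.norm_of_nonneg (h0 p hp.1)]
    exact h1 p hp.1 (hann p hp)
  have b1 := bound s A hs0 hsM hAB
  have b2 := bound t E ht0 htM hEB
  have e2 : ∫ p, (t p : ℂ) * E p = ∫ p in K \ Q, (t p : ℂ) * E p := by
    rw [setIntegral_eq_integral_of_forall_compl_eq_zero]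
    intro p hp
    by_cases hpQ : p ∈ Q
    · rw [hE0 p hpQ, mul_zero]
    · rw [hEs p (fun h => hp ⟨h, hpQ⟩), mul_zero]
  have hsi : IntegrableOn s K := hs.integrableOn_compact hKc
  have hsAi : IntegrableOn (fun p => (s p : ℂ) * A p) K :=
    ((continuous_ofReal.comp_continuousOn hs).mul hA.continuousOn).integrableOn_compact hKc
  have e1 : ∫ p, (s p : ℂ) * A p =
      ((∫ p in Q, s p : ℝ) : ℂ) + ∫ p in K \ Q, (s p : ℂ) * A p := by
    rw [← setIntegral_eq_integral_of_forall_compl_eq_zero (s := K)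
      (fun p hp => by rw [hAs p hp, mul_zero])]
    have hcast : ((∫ p in Q, s p : ℝ) : ℂ) = ∫ p in Q, (s p : ℂ) := integral_ofReal.symm
    have : ∫ p in Q, (s p : ℂ) = ∫ p in Q, (s p : ℂ) * A p :=
      setIntegral_congr_fun hQm (fun p hp => by simp only [hA1 p hp, mul_one])
    rw [setIntegral_sdiff hQm hsAi hQK]
    rw [hcast, this]
    ring
  have hq : ∫ p in Q, s p ≤ 2 * (M * B * (volume K).toReal) := by
    have h3 : ((∫ p in Q, s p : ℝ) : ℂ) =
        (∫ p in K \ Q, (t p : ℂ) * E p) - ∫ p in K \ Q, (s p : ℂ) * A p := by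
      rw [← e2, ← heq, e1]; ring
    have h4 := congrArg norm h3
    rw [Complex.norm_real] at h4
    have h5 := norm_sub_le (∫ p in K \ Q, (t p : ℂ) * E p) (∫ p in K \ Q, (s p : ℂ) * A p)
    have h6 := Real.le_norm_self (∫ p in Q, s p)
    linarith
  have hr : ∫ p in K \ Q, s p ≤ M * (volume K).toReal := by
    refine (Real.le_norm_self _).trans ((norm_setIntegral_le_of_norm_le_const hfin' (C := M) ?_).trans
      (mul_le_mul_of_nonneg_left hvol hM))
    intro p hp
    rw [Real.norm_of_nonneg (hs0 p hp.1)]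
    exact hsM p hp.1 (hann p hp)
  have := setIntegral_sdiff hQm hsi hQK
  linarith

lemma test_prod_bounded {X Y : ℂ → ℂ} (hX : IsTest X) (hY : IsTest Y) :
    (∃ B : ℝ, ∀ p : ℂ × ℂ, ‖X p.1 * Y p.2‖ ≤ B) ∧ Continuous (fun p : ℂ × ℂ => X p.1 * Y p.2) ∧
    ∀ p : ℂ × ℂ, p ∉ closedBall (0 : ℂ) 1 ×ˢ closedBall (0 : ℂ) 1 → X p.1 * Y p.2 = 0 := by
  obtain ⟨h1, h2, h3⟩ := prod_test hX hY
  refine ⟨h2.exists_bound_of_continuous h1.continuous, h1.continuous, ?_⟩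
  intro p hp
  by_contra h
  exact hp (Set.prod_mono (closedBall_subset_closedBall (by norm_num))
        (closedBall_subset_closedBall (by norm_num)) (h3 (subset_tsupport _ h)))


lemma stokes_identity {U : Set (ℂ × ℂ)} {t₁₁ t₂₂ : ℂ × ℂ → ℝ} {t₁₂ : ℂ × ℂ → ℂ}
    (hU : IsOpen U)
    (hK : (closedBall (0 : ℂ) 1 ×ˢ closedBall (0 : ℂ) 1) ⊆ U)
    (h11 : ContDiffOn ℝ 1 t₁₁ U) (h22 : ContDiffOn ℝ 1 t₂₂ U) (h12 : ContDiffOn ℝ 1 t₁₂ U)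
    (hc1 : ∀ p ∈ U, wirtingerFst (fun q => (t₂₂ q : ℂ)) p = wirtingerSnd t₁₂ p)
    (hc2 : ∀ p ∈ U, wirtingerSnd (fun q => (t₁₁ q : ℂ)) p =
        wirtingerFst (fun q => starRingEnd ℂ (t₁₂ q)) p)
    {X Y : ℂ → ℂ} (hX : IsTest X) (hY : IsTest Y) :
    ∫ p, (t₂₂ p : ℂ) * (dOp (-I) (dOp I X) p.1 * Y p.2) =
    ∫ p, (t₁₁ p : ℂ) * (X p.1 * dOp I (dOp (-I) Y) p.2) := by
  have h11' : ContDiffOn ℝ 1 (fun q => (t₁₁ q : ℂ)) U := ofRealCLM.contDiff.comp_contDiffOn h11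
  have h22' : ContDiffOn ℝ 1 (fun q => (t₂₂ q : ℂ)) U := ofRealCLM.contDiff.comp_contDiffOn h22
  have s1 := ibp1 hU hK h22' (hX.dOp I) hY (-I)
  have s2 := ibp2 hU hK h12 (hX.dOp I) hY (-I)
  have s3 := ibp1 hU hK h12 hX (hY.dOp (-I)) I
  have s4 := ibp2 hU hK h11' hX (hY.dOp (-I)) I
  have c1 := integral_test_congr hK (a := fun p => (1 / 2 : ℂ) *
      (fderiv ℝ (fun q => (t₂₂ q : ℂ)) p (1, 0) + -I * fderiv ℝ (fun q => (t₂₂ q : ℂ)) p (I, 0)))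
    (b := fun p => (1 / 2 : ℂ) * (fderiv ℝ t₁₂ p (0, 1) + -I * fderiv ℝ t₁₂ p (0, I)))
    (by
      intro p hp
      have := hc1 p hp
      simp only [wirtingerFst, wirtingerSnd] at this
      linear_combination this) (hX.dOp I) hY
  have c2 := integral_test_congr hK (a := fun p => (1 / 2 : ℂ) *
      (fderiv ℝ (fun q => (t₁₁ q : ℂ)) p (0, 1) + I * fderiv ℝ (fun q => (t₁₁ q : ℂ)) p (0, I)))
    (b := fun p => (1 / 2 : ℂ) * (fderiv ℝ t₁₂ p (1, 0) + I * fderiv ℝ t₁₂ p (I, 0)))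
    (by
      intro p hp
      have := congrArg (starRingEnd ℂ) (hc2 p hp)
      have d1 : HasFDerivAt t₁₂ (fderiv ℝ t₁₂ p) p :=
        ((h12.contDiffAt (hU.mem_nhds hp)).differentiableAt one_ne_zero).hasFDerivAt
      have d2 : HasFDerivAt (fun q => starRingEnd ℂ (t₁₂ q)) _ p :=
        (conjCLE : ℂ →L[ℝ] ℂ).hasFDerivAt.comp p d1
      have d3 : HasFDerivAt t₁₁ (fderiv ℝ t₁₁ p) p :=
        ((h11.contDiffAt (hU.mem_nhds hp)).differentiableAt one_ne_zero).hasFDerivAt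
      have d4 : HasFDerivAt (fun q => (t₁₁ q : ℂ)) _ p := ofRealCLM.hasFDerivAt.comp p d3
      simp only [wirtingerFst, wirtingerSnd, d2.fderiv, d4.fderiv] at this
      simp only [d4.fderiv]
      simp at this ⊢
      linear_combination this) hX (hY.dOp (-I))
  rw [s1, s2] at c1
  rw [s4, s3] at c2
  linear_combination c2 - c1

/-- **A priori mass estimate** (the analytic core of Theorem 2 of the paper,
formulas (2.4.1)–(2.4.3)): there is an absolute constant `C` such that for every
smooth closed positive `(1,1)`-form with coefficients `t₁₁, t₁₂, t₂₂` defined near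
the closed unit bidisc and bounded by `M` on the closed Hartogs annulus, the total
mass of the form over the open bidisc is at most `C·M`. -/
theorem mass_estimate_bidisc :
    ∃ C : ℝ, ∀ (U : Set (ℂ × ℂ)) (t₁₁ t₂₂ : ℂ × ℂ → ℝ) (t₁₂ : ℂ × ℂ → ℂ) (M : ℝ),
      IsOpen U →
      (closedBall (0 : ℂ) 1 ×ˢ closedBall (0 : ℂ) 1) ⊆ U →
      ContDiffOn ℝ 1 t₁₁ U → ContDiffOn ℝ 1 t₂₂ U → ContDiffOn ℝ 1 t₁₂ U →
      (∀ p ∈ U, 0 ≤ t₁₁ p) → (∀ p ∈ U, 0 ≤ t₂₂ p) →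
      (∀ p ∈ U, ‖t₁₂ p‖ ^ 2 ≤ t₁₁ p * t₂₂ p) →
      (∀ p ∈ U, wirtingerFst (fun q => (t₂₂ q : ℂ)) p = wirtingerSnd t₁₂ p) →
      (∀ p ∈ U, wirtingerSnd (fun q => (t₁₁ q : ℂ)) p =
        wirtingerFst (fun q => starRingEnd ℂ (t₁₂ q)) p) →
      0 ≤ M →
      (∀ p ∈ (closedBall (0 : ℂ) 1 ×ˢ closedBall (0 : ℂ) 1),
        (1 / 2 : ℝ) ≤ max ‖p.1‖ ‖p.2‖ →
        t₁₁ p ≤ M ∧ t₂₂ p ≤ M ∧ ‖t₁₂ p‖ ≤ M) →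
      (∫ p in (ball (0 : ℂ) 1 ×ˢ ball (0 : ℂ) 1),
        (t₁₁ p + t₂₂ p + 2 * ‖t₁₂ p‖)) ≤ C * M := by
  obtain ⟨R, G, hR, hG, hR1, hR0, hG1⟩ := isTest_bump
  have t1 := test_prod_bounded ((hG.dOp I).dOp (-I)) hR
  have t2 := test_prod_bounded hG ((hR.dOp (-I)).dOp I)
  have t3 := test_prod_bounded hR ((hG.dOp (-I)).dOp I)
  have t4 := test_prod_bounded ((hR.dOp I).dOp (-I)) hG
  obtain ⟨⟨B1, hB1⟩, cont1, z1⟩ := t1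
  obtain ⟨⟨B2, hB2⟩, cont2, z2⟩ := t2
  obtain ⟨⟨B3, hB3⟩, cont3, z3⟩ := t3
  obtain ⟨⟨B4, hB4⟩, cont4, z4⟩ := t4
  set B := max (max B1 B2) (max B3 B4) with hB
  have l1 : B1 ≤ B := by simp [hB]
  have l2 : B2 ≤ B := by simp [hB]
  have l3 : B3 ≤ B := by simp [hB]
  have l4 : B4 ≤ B := by simp [hB]
  refine ⟨4 * ((2 * B + 1) * (volume (closedBall (0 : ℂ) 1 ×ˢ closedBall (0 : ℂ) 1)).toReal), ?_⟩
  intro U t₁₁ t₂₂ t₁₂ M hU hK h11 h22 h12 p11 p22 p12 hc1 hc2 hM hann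
  have I1 := stokes_identity hU hK h11 h22 h12 hc1 hc2 hG hR
  have I2 := stokes_identity hU hK h11 h22 h12 hc1 hc2 hR hG
  have hII : -(-I) = I := neg_neg I
  have E1 := est (s := t₂₂) (t := t₁₁) (M := M) (B := B) (h22.continuousOn.mono hK) cont1
    (fun p hp => p22 p (hK hp)) (fun p hp => p11 p (hK hp))
    (fun p hp h => (hann p hp h).2.1) (fun p hp h => (hann p hp h).1) hM
    (fun p => (hB1 p).trans l1) (fun p => (hB2 p).trans l2)
    (fun p hp => by rw [hR1 _ hp.2, hG1 I I_mul_I _ hp.1, mul_one])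
    (fun p hp => by
      have := hR0 (-I) _ hp.2
      rw [hII] at this
      rw [this, mul_zero]) z1 z2 I1
  have E2 := est (s := t₁₁) (t := t₂₂) (M := M) (B := B) (h11.continuousOn.mono hK) cont3
    (fun p hp => p11 p (hK hp)) (fun p hp => p22 p (hK hp))
    (fun p hp h => (hann p hp h).1) (fun p hp h => (hann p hp h).2.1) hM
    (fun p => (hB3 p).trans l3) (fun p => (hB4 p).trans l4)
    (fun p hp => by
      have := hG1 (-I) (by simp) _ hp.2
      rw [hII] at this
      rw [this, hR1 _ hp.1, mul_one])
    (fun p hp => by rw [hR0 I _ hp.1, zero_mul]) z3 z4 I2.symm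
  have hKc : IsCompact (closedBall (0 : ℂ) 1 ×ˢ closedBall (0 : ℂ) 1) :=
    (isCompact_closedBall _ _).prod (isCompact_closedBall _ _)
  have i11 : IntegrableOn t₁₁ (closedBall (0 : ℂ) 1 ×ˢ closedBall (0 : ℂ) 1) :=
    (h11.continuousOn.mono hK).integrableOn_compact hKc
  have i22 : IntegrableOn t₂₂ (closedBall (0 : ℂ) 1 ×ˢ closedBall (0 : ℂ) 1) :=
    (h22.continuousOn.mono hK).integrableOn_compact hKc
  have i12 : IntegrableOn (fun p => ‖t₁₂ p‖) (closedBall (0 : ℂ) 1 ×ˢ closedBall (0 : ℂ) 1) :=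
    (h12.continuousOn.mono hK).norm.integrableOn_compact hKc
  have hKm := hKc.isClosed.measurableSet
  have itot : IntegrableOn (fun p => t₁₁ p + t₂₂ p + 2 * ‖t₁₂ p‖)
    (closedBall (0 : ℂ) 1 ×ˢ closedBall (0 : ℂ) 1) := (i11.add i22).add (i12.const_mul 2)
  have ibd : IntegrableOn (fun p => 2 * t₁₁ p + 2 * t₂₂ p)
    (closedBall (0 : ℂ) 1 ×ˢ closedBall (0 : ℂ) 1) := (i11.const_mul 2).add (i22.const_mul 2)
  have step1 : (∫ p in (ball (0 : ℂ) 1 ×ˢ ball (0 : ℂ) 1), (t₁₁ p + t₂₂ p + 2 * ‖t₁₂ p‖)) ≤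
      ∫ p in (closedBall (0 : ℂ) 1 ×ˢ closedBall (0 : ℂ) 1), (t₁₁ p + t₂₂ p + 2 * ‖t₁₂ p‖) := by
    refine setIntegral_mono_set itot ?_
      (Set.prod_mono ball_subset_closedBall ball_subset_closedBall).eventuallyLE
    filter_upwards [ae_restrict_mem hKm] with p hp
    have := p11 p (hK hp)
    have := p22 p (hK hp)
    simp only [Pi.zero_apply]
    positivity
  have step2 : ∫ p in (closedBall (0 : ℂ) 1 ×ˢ closedBall (0 : ℂ) 1),
      (t₁₁ p + t₂₂ p + 2 * ‖t₁₂ p‖) ≤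
      ∫ p in (closedBall (0 : ℂ) 1 ×ˢ closedBall (0 : ℂ) 1), (2 * t₁₁ p + 2 * t₂₂ p) := by
    refine setIntegral_mono_on itot ibd hKm ?_
    intro p hp
    have a1 := p11 p (hK hp)
    have a2 := p22 p (hK hp)
    have a3 := p12 p (hK hp)
    have : 2 * ‖t₁₂ p‖ ≤ t₁₁ p + t₂₂ p := by
      apply abs_le_of_sq_le_sq' _ (by positivity) |>.2
      nlinarith [sq_nonneg (t₁₁ p - t₂₂ p)]
    linarith
  rw [integral_add (i11.const_mul 2) (i22.const_mul 2), integral_const_mul, integral_const_mul]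
    at step2
  linarith
end

section
/- Let U ⊆ ℂ² be an open neighbourhood of the closed unit bidisc {(z₁,z₂) ∈ ℂ² : |z₁| ≤ 1 and |z₂| ≤ 1}, and let a, b : U → ℂ be C¹ functions satisfying ∂b/∂z₁ = ∂a/∂z₂ on U (Wirtinger derivatives). Define μ(z₁) = ∫_{|w| ≤ 1} b(z₁, w) dλ(w), where λ is Lebesgue measure on ℂ. Then for every z₁ with |z₁| < 1 the Wirtinger derivative ∂μ/∂z₁ exists and equals ½·∫₀^{2π} a(z₁, e^{iθ})·e^{−iθ} dθ, that is, ∂μ/∂z₁(z₁) = (i/2)·∮_{|w|=1} a(z₁, w) d(conj w). (This is the displayed intermediate computation (2.4.1)–(2.4.2) in the proof of the paper's Theorem 2: the derivative of the fibre integral of one coefficient of a closed (1,1)-form is a boundary integral of another coefficient.) -/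
open Metric MeasureTheory Complex

/-- The Wirtinger derivative `∂μ/∂z = ½(∂μ/∂x − i·∂μ/∂y)` of a one-variable
function `μ : ℂ → ℂ`, computed from the real Fréchet derivative. -/
noncomputable def wirtinger (μ : ℂ → ℂ) (z : ℂ) : ℂ :=
  (1 / 2 : ℂ) * (fderiv ℝ μ z 1 - Complex.I * fderiv ℝ μ z Complex.I)

/-- Cauchy–Green formula on the unit disc (`dz`-derivative version). -/
theorem green_disc (V : Set ℂ) (hV : IsOpen V) (hD : closedBall (0 : ℂ) 1 ⊆ V)
    (f : ℂ → ℂ) (hf : ContDiffOn ℝ 1 f V) :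
    ∫ w in closedBall (0 : ℂ) 1, wirtinger f w = (1 / 2 : ℂ) * ∫ θ in (0 : ℝ)..(2 * Real.pi),
        f (Complex.exp (θ * Complex.I)) * Complex.exp (-(θ * Complex.I)) := by
  have hfd : ∀ w ∈ V, HasFDerivAt f (fderiv ℝ f w) w := fun w hw =>
    ((hf.differentiableOn one_ne_zero).differentiableAt (hV.mem_nhds hw)).hasFDerivAt
  have hfc : ContinuousOn (fderiv ℝ f) V := hf.continuousOn_fderiv_of_isOpen hV le_rfl
  let c1 : ℝ × ℝ →L[ℝ] ℂ := ofRealCLM.comp (ContinuousLinearMap.fst ℝ ℝ ℝ)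
  let c2 : ℝ × ℝ →L[ℝ] ℂ := ofRealCLM.comp (ContinuousLinearMap.snd ℝ ℝ ℝ)
  let P : ℝ × ℝ → ℂ := fun p => c1 p * cexp (c2 p * I)
  let R : Set (ℝ × ℝ) := Set.Icc ((0 : ℝ), -Real.pi) ((1 : ℝ), Real.pi)
  have hPc : Continuous P := by fun_prop
  have hnP : ∀ p, ‖P p‖ = |p.1| := by
    intro p
    have : ‖cexp (((p.2 : ℝ) : ℂ) * I)‖ = 1 := norm_exp_ofReal_mul_I _
    simp [P, c1, c2, this]
  have hPV : ∀ p ∈ R, P p ∈ V := by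
    intro p hp
    apply hD
    rw [mem_closedBall_zero_iff, hnP, abs_of_nonneg hp.1.1]
    exact hp.2.1
  let F : ℝ × ℝ → ℂ := fun p => c1 p * cexp (c2 p * (-I)) * f (P p)
  let G : ℝ × ℝ → ℂ := fun p => (-I) * cexp (c2 p * (-I)) * f (P p)
  have hfP : ContinuousOn (fun p => f (P p)) R :=
    hf.continuousOn.comp hPc.continuousOn hPV
  have hex : ∀ (k : ℂ) (p : ℝ × ℝ), HasFDerivAt (fun p => cexp (c2 p * k))
      (cexp (c2 p * k) • (k • c2)) p := by
    intro k p
    have := (c2.hasFDerivAt (x := p)).mul_const k |>.cexp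
    simpa using this
  have hP' : ∀ p, HasFDerivAt P _ p := fun p => (c1.hasFDerivAt (x := p)).mul (hex I p)
  have hFG : ∀ p ∈ R, ∃ F' G' : ℝ × ℝ →L[ℝ] ℂ, HasFDerivAt F F' p ∧ HasFDerivAt G G' p ∧
      F' (1, 0) + G' (0, 1) = p.1 • (2 * wirtinger f (P p)) := by
    intro p hp
    have h1 := (hfd (P p) (hPV p hp)).comp p (hP' p)
    have h2 := ((c1.hasFDerivAt (x := p)).mul (hex (-I) p)).mul h1
    have h3 := ((hex (-I) p).const_mul (-I)).mul h1
    refine ⟨_, _, h2, h3, ?_⟩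
    generalize hA : fderiv ℝ f (P p) = D
    have hlin : ∀ z : ℂ, D z = z.re * D 1 + z.im * D I := by
      intro z
      have : z = z.re • (1 : ℂ) + z.im • I := by simp [Complex.re_add_im]
      conv_lhs => rw [this]
      rw [map_add, map_smul, map_smul]; simp
    have e1 : cexp (c2 p * I) = (Real.cos p.2 : ℂ) + Real.sin p.2 * I := by
      simp [c2, Complex.exp_mul_I]
    have e2 : cexp (c2 p * (-I)) = (Real.cos p.2 : ℂ) - Real.sin p.2 * I := by
      have : c2 p * (-I) = ((-p.2 : ℝ) : ℂ) * I := by simp [c2]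
      rw [this, Complex.exp_mul_I]; simp [sub_eq_add_neg]
    have hcs : (Real.cos p.2 : ℂ) ^ 2 + (Real.sin p.2 : ℂ) ^ 2 = 1 := by
      exact_mod_cast Real.cos_sq_add_sin_sq p.2
    have c11 : c1 (1, 0) = 1 := by simp [c1]
    have c12 : c1 (0, 1) = 0 := by simp [c1]
    have c21 : c2 (1, 0) = 0 := by simp [c2]
    have c22 : c2 (0, 1) = 1 := by simp [c2]
    have c1p : c1 p = (p.1 : ℂ) := by simp [c1]
    have d1 : D (cexp (c2 p * I)) = Real.cos p.2 * D 1 + Real.sin p.2 * D I := by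
      rw [hlin, e1]; simp [-ofReal_cos, -ofReal_sin]
    have d2 : D (c1 p * (cexp (c2 p * I) * I)) =
        p.1 * (- Real.sin p.2 * D 1 + Real.cos p.2 * D I) := by
      rw [hlin, e1, c1p]; simp [-ofReal_cos, -ofReal_sin]; ring
    simp only [wirtinger, hA]
    simp only [add_apply, smul_apply, Pi.mul_apply,
      ContinuousLinearMap.comp_apply, c11, c12, c21, c22, smul_eq_mul, mul_zero, mul_one,
      zero_add, add_zero, d1, d2, Function.comp, real_smul]
    rw [e2, c1p]
    generalize (Real.cos p.2 : ℂ) = c at *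
    generalize (Real.sin p.2 : ℂ) = s at *
    generalize f (P p) = y
    linear_combination (p.1 : ℂ) * (D 1 - I * D I) * hcs +
      (y * (c - s * I) - p.1 * s ^ 2 * D 1 + p.1 * s * c * D I) * I_sq
  choose! F' G' hF hG hsum using hFG
  have hwc : ContinuousOn (fun w => wirtinger f w) V := by
    have h1 : ContinuousOn (fun w => fderiv ℝ f w 1) V := hfc.clm_apply continuousOn_const
    have h2 : ContinuousOn (fun w => fderiv ℝ f w I) V := hfc.clm_apply continuousOn_const
    exact continuousOn_const.mul (h1.sub (continuousOn_const.mul h2))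
  have hRm : MeasurableSet R := measurableSet_Icc
  have hcontR : ContinuousOn (fun p : ℝ × ℝ => p.1 • (2 * wirtinger f (P p))) R :=
    continuous_fst.continuousOn.smul
      (continuousOn_const.mul (hwc.comp hPc.continuousOn hPV))
  have hsub : ∀ x ∈ Set.Ioo (0 : ℝ) 1 ×ˢ Set.Ioo (-Real.pi) Real.pi, x ∈ R := by
    rintro x ⟨hx1, hx2⟩
    exact ⟨⟨hx1.1.le, hx2.1.le⟩, ⟨hx1.2.le, hx2.2.le⟩⟩
  have hdiv := integral_divergence_prod_Icc_of_hasFDerivAt_of_le F G F' G'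
    ((0 : ℝ), -Real.pi) ((1 : ℝ), Real.pi)
    ⟨zero_le_one, by have := Real.pi_pos; simp only; linarith⟩
    (fun x hx => (hF x hx).continuousAt.continuousWithinAt)
    (fun x hx => (hG x hx).continuousAt.continuousWithinAt)
    (fun x hx => hF x (hsub x hx)) (fun x hx => hG x (hsub x hx))
    ((integrableOn_congr_fun hsum hRm).2 (hcontR.integrableOn_compact isCompact_Icc))
  have hpolar : ∫ w in closedBall (0 : ℂ) 1, wirtinger f w =
      ∫ p in R, p.1 • wirtinger f (P p) := by
    have hPs : ∀ p, Complex.polarCoord.symm p = P p := by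
      intro p
      simp [P, c1, c2, Complex.exp_mul_I]
    rw [← integral_indicator measurableSet_closedBall,
      ← Complex.integral_comp_polarCoord_symm]
    have hae : R =ᵐ[volume] Set.Ioc (0 : ℝ) 1 ×ˢ Set.Ioo (-Real.pi) Real.pi := by
      have : R = Set.Icc (0 : ℝ) 1 ×ˢ Set.Icc (-Real.pi) Real.pi := by
        simp only [R, Set.Icc_prod_eq]
      rw [this]
      exact Measure.set_prod_ae_eq Ioc_ae_eq_Icc.symm Ioo_ae_eq_Icc.symm
    rw [setIntegral_congr_set hae]
    have hm1 : MeasurableSet (Set.Ioc (0 : ℝ) 1 ×ˢ Set.Ioo (-Real.pi) Real.pi) :=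
      measurableSet_Ioc.prod measurableSet_Ioo
    have hm2 : MeasurableSet polarCoord.target := by
      rw [polarCoord_target]; exact measurableSet_Ioi.prod measurableSet_Ioo
    rw [← integral_indicator hm1, ← integral_indicator hm2]
    congr 1
    funext p
    have hin : (closedBall (0 : ℂ) 1).indicator (wirtinger f) (P p) =
        if |p.1| ≤ 1 then wirtinger f (P p) else 0 := by
      by_cases h : |p.1| ≤ 1
      · rw [Set.indicator_of_mem (by rwa [mem_closedBall_zero_iff, hnP]), if_pos h]
      · rw [Set.indicator_of_notMem (by rwa [mem_closedBall_zero_iff, hnP]), if_neg h]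
    simp only [hPs, polarCoord_target, Set.indicator_apply (_ ×ˢ _), hin,
      Set.mem_prod, Set.mem_Ioi, Set.mem_Ioc, Set.mem_Ioo]
    by_cases h0 : 0 < p.1
    · rw [abs_of_pos h0]
      by_cases h1 : p.1 ≤ 1 <;> simp [h0, h1]
    · simp [h0]
  rw [setIntegral_congr_fun hRm hsum] at hdiv
  have hG0 : ∀ x : ℝ, G (x, Real.pi) = G (x, -Real.pi) := by
    intro x
    have q : cexp (-((Real.pi : ℂ) * I)) = -1 := by
      rw [Complex.exp_neg, Complex.exp_pi_mul_I]; norm_num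
    simp [G, P, c1, c2, Complex.exp_pi_mul_I, q]
  have hF0 : ∀ y : ℝ, F (0, y) = 0 := by
    intro y
    simp [F, c1]
  have hF1 : ∀ y : ℝ, F (1, y) = f (cexp (y * I)) * cexp (-(y * I)) := by
    intro y
    simp [F, P, c1, c2, mul_comm]
  have hper : Function.Periodic (fun y : ℝ => f (cexp (y * I)) * cexp (-(y * I)))
      (2 * Real.pi) := by
    intro y
    have q : cexp (((y + 2 * Real.pi : ℝ) : ℂ) * I) = cexp (y * I) := by
      rw [← Complex.exp_periodic (y * I)]; congr 1; push_cast; ring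
    simp only [Complex.exp_neg, q]
  have hshift := hper.intervalIntegral_add_eq (-Real.pi) 0
  rw [zero_add, show -Real.pi + 2 * Real.pi = Real.pi by ring] at hshift
  simp only [hG0, hF0, hF1, sub_self, zero_add, intervalIntegral.integral_zero, sub_zero] at hdiv
  rw [hpolar, ← hshift, ← hdiv, ← integral_const_mul]
  congr 1
  funext p
  simp only [real_smul]
  ring

/-- **Formulas (2.4.1)–(2.4.2) of the paper**: for `C¹` functions `a, b` near the
closed unit bidisc with `∂b/∂z₁ = ∂a/∂z₂`, the fibre integral
`μ(z₁) = ∫_{|w|≤1} b(z₁,w) dλ(w)` is (real-)differentiable on the open unit disc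
and its Wirtinger derivative is the boundary integral
`½·∫₀^{2π} a(z₁, e^{iθ})·e^{−iθ} dθ`. -/
theorem wirtinger_deriv_fibre_integral (U : Set (ℂ × ℂ)) (hU : IsOpen U)
    (hP : closedBall (0 : ℂ) 1 ×ˢ closedBall (0 : ℂ) 1 ⊆ U)
    (a b : ℂ × ℂ → ℂ) (ha : ContDiffOn ℝ 1 a U) (hb : ContDiffOn ℝ 1 b U)
    (hclosed : ∀ p ∈ U, wirtingerFst b p = wirtingerSnd a p)
    (μ : ℂ → ℂ) (hμ : ∀ z₁ : ℂ, μ z₁ = ∫ w in closedBall (0 : ℂ) 1, b (z₁, w))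
    (z₁ : ℂ) (hz₁ : ‖z₁‖ < 1) :
    DifferentiableAt ℝ μ z₁ ∧
      wirtinger μ z₁ = (1 / 2 : ℂ) * ∫ θ in (0 : ℝ)..(2 * Real.pi),
        a (z₁, Complex.exp (θ * Complex.I)) * Complex.exp (-(θ * Complex.I)) := by
  have hK : IsCompact (closedBall (0 : ℂ) 1) := isCompact_closedBall 0 1
  have hmem : ∀ z ∈ closedBall (0 : ℂ) 1, ∀ w ∈ closedBall (0 : ℂ) 1, (z, w) ∈ U :=
    fun z hz w hw => hP ⟨hz, hw⟩
  have hbd : ∀ p ∈ U, HasFDerivAt b (fderiv ℝ b p) p := fun p hp =>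
    ((hb.differentiableOn one_ne_zero).differentiableAt (hU.mem_nhds hp)).hasFDerivAt
  have had : ∀ p ∈ U, HasFDerivAt a (fderiv ℝ a p) p := fun p hp =>
    ((ha.differentiableOn one_ne_zero).differentiableAt (hU.mem_nhds hp)).hasFDerivAt
  have hbc : ContinuousOn (fderiv ℝ b) U := hb.continuousOn_fderiv_of_isOpen hU le_rfl
  let J : ℂ →L[ℝ] ℂ × ℂ := ContinuousLinearMap.inl ℝ ℂ ℂ
  let F' : ℂ → ℂ → ℂ →L[ℝ] ℂ := fun z w => (fderiv ℝ b (z, w)).comp J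
  have hF'U : ContinuousOn (fun p : ℂ × ℂ => F' p.1 p.2) U :=
    hbc.clm_comp continuousOn_const
  obtain ⟨C, hC⟩ := (hK.prod hK).exists_bound_of_continuousOn (hF'U.mono hP)
  have hz : z₁ ∈ ball (0 : ℂ) 1 := by simpa using hz₁
  have hzc := ball_subset_closedBall hz
  have hsl : ∀ z ∈ closedBall (0 : ℂ) 1,
      ContinuousOn (fun w : ℂ => ((z, w) : ℂ × ℂ)) (closedBall 0 1) := fun z _ => by fun_prop
  have hF'c : ContinuousOn (fun w => F' z₁ w) (closedBall 0 1) :=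
    hF'U.comp (hsl z₁ hzc) (hmem z₁ hzc)
  have hFc : ∀ z ∈ closedBall (0 : ℂ) 1, ContinuousOn (fun w => b (z, w)) (closedBall 0 1) :=
    fun z hz => hb.continuousOn.comp (hsl z hz) (hmem z hz)
  have hder : HasFDerivAt (fun z => ∫ w in closedBall (0 : ℂ) 1, b (z, w))
      (∫ w in closedBall (0 : ℂ) 1, F' z₁ w) z₁ := by
    refine hasFDerivAt_integral_of_dominated_of_fderiv_le (𝕜 := ℝ)
      (s := ball (0 : ℂ) 1) (bound := fun _ => C)
      (isOpen_ball.mem_nhds hz) ?_ ((hFc z₁ hzc).integrableOn_compact hK)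
      (hF'c.aestronglyMeasurable measurableSet_closedBall) ?_
      (continuousOn_const.integrableOn_compact hK) ?_
    · filter_upwards [isOpen_ball.mem_nhds hz] with z hz'
      exact (hFc z (ball_subset_closedBall hz')).aestronglyMeasurable measurableSet_closedBall
    · refine (ae_restrict_iff' measurableSet_closedBall).2 (.of_forall fun w hw z hz' => ?_)
      exact hC (z, w) ⟨ball_subset_closedBall hz', hw⟩
    · refine (ae_restrict_iff' measurableSet_closedBall).2 (.of_forall fun w hw z hz' => ?_)
      exact (hbd (z, w) (hmem z (ball_subset_closedBall hz') w hw)).comp z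
        (hasFDerivAt_prodMk_left z w)
  have hμ' : μ = fun z => ∫ w in closedBall (0 : ℂ) 1, b (z, w) := funext hμ
  rw [← hμ'] at hder
  refine ⟨hder.differentiableAt, ?_⟩
  have hF'i : IntegrableOn (fun w => F' z₁ w) (closedBall 0 1) := hF'c.integrableOn_compact hK
  let V : Set ℂ := {w | (z₁, w) ∈ U}
  have hV : IsOpen V := hU.preimage (by fun_prop : Continuous fun w : ℂ => ((z₁, w) : ℂ × ℂ))
  have hgreen := green_disc V hV (hmem z₁ hzc) (fun w => a (z₁, w))
    (ha.comp (by fun_prop : ContDiff ℝ 1 fun w : ℂ => ((z₁, w) : ℂ × ℂ)).contDiffOn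
      (fun w hw => hw))
  rw [← hgreen, wirtinger, hder.fderiv, ContinuousLinearMap.integral_apply hF'i,
    ContinuousLinearMap.integral_apply hF'i, ← integral_const_mul, ← integral_sub,
    ← integral_const_mul]
  · refine setIntegral_congr_fun measurableSet_closedBall fun w hw => ?_
    have h1 := hclosed (z₁, w) (hmem z₁ hzc w hw)
    have h2 : fderiv ℝ (fun w => a (z₁, w)) w =
        (fderiv ℝ a (z₁, w)).comp (ContinuousLinearMap.inr ℝ ℂ ℂ) :=
      ((had (z₁, w) (hmem z₁ hzc w hw)).comp w (hasFDerivAt_prodMk_right z₁ w)).fderiv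
    simp only [wirtingerFst, wirtingerSnd] at h1
    simpa [wirtinger, h2, F', J] using h1
  · exact hF'i.apply_continuousLinearMap 1
  · exact (hF'i.apply_continuousLinearMap I).const_mul I
end
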